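/- arXiv:1812.04707 — 7 statements merged into one kernel-verified Lean document; each statement's English description precedes it below -/
import Mathlib

section
/- The image of the zero level set J⁻¹(0) = {(q, p) ∈ ℂ × ℂ : Im(conj(q)·p) = 0} of the angular momentum under the map K(q,p) = (E₊(q,p), E₋(q,p), H(q,p)) equals the upper cone C = {(e₊, e₋, h) ∈ ℝ³ : h ≥ 0 and h² = e₊² + e₋²}. -/
/-!
On `J = 0` the identity `H² - J² = E₊² + E₋²` reduces to the cone equation, and `H ≥ 0` always.
Conversely, real pairs `(q, p)` have `J = 0` and satisfy
`(p + i q)² = p² - q² + 2 i q p = 2 (E₊ + i E₋)` and `|p + i q|² = 2 H`, so a preimage of a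
point `(a, b, h)` of the cone is read off from a complex square root of `2 (a + i b)`.
-/

open Complex

/-- The map `K(q,p) = (E₊, E₋, H)` on the phase space `ℂ × ℂ` of the planar isotropic
harmonic oscillator. -/
noncomputable def oscK (z : ℂ × ℂ) : ℝ × ℝ × ℝ :=
  ((Complex.normSq z.2 - Complex.normSq z.1) / 2,
    ((starRingEnd ℂ) z.1 * z.2).re,
    (Complex.normSq z.2 + Complex.normSq z.1) / 2)

/-- The angular momentum `J(q,p) = Im(conj q · p)`. -/
noncomputable def oscJ (z : ℂ × ℂ) : ℝ := ((starRingEnd ℂ) z.1 * z.2).im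

/-- The identity `H² - J² = E₊² + E₋²`. -/
lemma oscK_sq_sub_oscJ_sq (z : ℂ × ℂ) :
    (oscK z).2.2 ^ 2 - oscJ z ^ 2 = (oscK z).1 ^ 2 + (oscK z).2.1 ^ 2 := by
  simp only [oscK, oscJ, normSq_apply, mul_re, mul_im, conj_re, conj_im]
  ring

/-- Every point of the upper cone is the image of a pair of real numbers. -/
lemma exists_real_oscK_eq {a b h : ℝ} (h0 : 0 ≤ h) (hc : h ^ 2 = a ^ 2 + b ^ 2) :
    ∃ q p : ℝ, oscK (q, p) = (a, b, h) := by
  -- With `s = p + i q`, the equations for `E₊` and `E₋` are the two parts of `s² = 2 (a + i b)`.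
  obtain ⟨s, hs⟩ := IsAlgClosed.exists_pow_nat_eq (⟨2 * a, 2 * b⟩ : ℂ) (n := 2) (by norm_num)
  have hre : s.re * s.re - s.im * s.im = 2 * a := by
    simpa [sq] using congrArg re hs
  have him : s.re * s.im + s.im * s.re = 2 * b := by
    simpa [sq] using congrArg im hs
  -- Taking moduli in `s² = 2 (a + i b)` gives `|s|² = 2h`, since both sides are nonnegative.
  have hnorm : s.re * s.re + s.im * s.im = 2 * h := by
    rw [← sq_eq_sq₀ (add_nonneg (mul_self_nonneg _) (mul_self_nonneg _)) (by positivity)]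
    linear_combination (s.re * s.re - s.im * s.im + 2 * a) * hre +
      (s.re * s.im + s.im * s.re + 2 * b) * him - 4 * hc
  refine ⟨s.im, s.re, ?_⟩
  simp only [oscK, normSq_ofReal, conj_ofReal, re_ofReal_mul, ofReal_re, Prod.mk.injEq]
  refine ⟨?_, ?_, ?_⟩ <;> linarith

/-- The image of the zero level set `J⁻¹(0)` of the angular momentum under the map
`K = (E₊, E₋, H)` is the upper cone `{(e₊, e₋, h) : h ≥ 0, h² = e₊² + e₋²}`. -/
theorem oscK_image_J_zero :
    oscK '' {z : ℂ × ℂ | oscJ z = 0} =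
      {v : ℝ × ℝ × ℝ | 0 ≤ v.2.2 ∧ v.2.2 ^ 2 = v.1 ^ 2 + v.2.1 ^ 2} := by
  ext ⟨a, b, h⟩
  constructor
  · rintro ⟨z, hz, hK⟩
    have hid := oscK_sq_sub_oscJ_sq z
    have hJ : oscJ z = 0 := hz
    rw [← hK]
    refine ⟨?_, by simpa [hJ] using hid⟩
    exact div_nonneg (add_nonneg (normSq_nonneg _) (normSq_nonneg _)) zero_le_two
  · rintro ⟨h0, hc⟩
    obtain ⟨q, p, hK⟩ := exists_real_oscK_eq h0 hc
    exact ⟨(q, p), by simp [oscJ], hK⟩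
end

section
/- Consider the map I(q̄, p̄) = (q̄(p̄² − 1), 2q̄p̄, q̄(p̄² + 1)) defined for q̄ > 0 and p̄ ∈ ℝ. Its range equals the set {(e₊, e₋, h) ∈ ℝ³ : h > 0, h² = e₊² + e₋², and not (e₋ = 0 and e₊ = h)}, i.e. the upper cone with the origin and the line L = {(h, 0, h) : h > 0} removed. Moreover, I is injective on {(q̄, p̄) : q̄ > 0}. -/
/-!
The difference of the third and first components of `oscI (q, p)` is `2 * q`, and the second is
`2 * q * p`, so for `q > 0` the point is recovered as `q = (h - a) / 2`, `p = b / (h - a)`, which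
gives injectivity. Conversely, these formulas produce a preimage of `(a, b, h)` as soon as
`h - a > 0`. On the upper cone `b ^ 2 = (h - a) * (h + a)`, so `a ≤ h`, and `a = h` forces `b = 0`:
exactly the excluded line.
-/

/-- The map `I(q̄, p̄) = (q̄(p̄² − 1), 2q̄p̄, q̄(p̄² + 1))` on `T*ℝ_{>0}`. -/
def oscI (z : ℝ × ℝ) : ℝ × ℝ × ℝ :=
  (z.1 * (z.2 ^ 2 - 1), 2 * z.1 * z.2, z.1 * (z.2 ^ 2 + 1))

/-- The image of `{q̄ > 0}` under `I` is the upper cone with the origin and the line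
`L = {(h, 0, h) : h > 0}` removed, and `I` is injective on `{q̄ > 0}`. -/
theorem oscI_image_and_injective :
    oscI '' {z : ℝ × ℝ | 0 < z.1} =
      {v : ℝ × ℝ × ℝ | 0 < v.2.2 ∧ v.2.2 ^ 2 = v.1 ^ 2 + v.2.1 ^ 2 ∧
        ¬(v.2.1 = 0 ∧ v.1 = v.2.2)} ∧
    Set.InjOn oscI {z : ℝ × ℝ | 0 < z.1} := by
  constructor
  · ext ⟨a, b, h⟩
    simp only [oscI, Set.mem_image, Set.mem_ofPred_eq, Prod.exists, Prod.mk.injEq]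
    constructor
    · rintro ⟨q, p, hq, rfl, rfl, rfl⟩
      refine ⟨by positivity, by ring, ?_⟩
      rintro ⟨-, h2⟩
      linarith
    · rintro ⟨hh, hcone, hline⟩
      have hle : a ≤ h := by nlinarith [sq_nonneg b]
      have hne : a ≠ h := by
        rintro rfl
        exact hline ⟨by nlinarith, rfl⟩
      have hpos : 0 < h - a := sub_pos.mpr (lt_of_le_of_ne hle hne)
      have hp : (b / (h - a)) ^ 2 = (h + a) / (h - a) := by
        rw [div_pow, div_eq_div_iff (by positivity) hpos.ne']
        linear_combination (-(h - a)) * hcone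
      refine ⟨(h - a) / 2, b / (h - a), by positivity, ?_, ?_, ?_⟩
      · rw [hp]
        field_simp
        ring
      · field_simp
      · rw [hp]
        field_simp
        ring
  · rintro ⟨q, p⟩ hq ⟨q', p'⟩ - heq
    simp only [oscI, Prod.mk.injEq, Set.mem_ofPred_eq] at hq heq ⊢
    obtain ⟨h1, h2, h3⟩ := heq
    have hqq : q = q' := by linarith
    subst hqq
    exact ⟨rfl, mul_left_cancel₀ (by positivity : 2 * q ≠ 0) h2⟩
end

section
/- Fix h₀ > 0 and t₀ ∈ ℝ. For every t ∈ ℝ with cos(t + t₀) ≠ 0, one has I(h₀ cos²(t + t₀), −tan(t + t₀)) = (−h₀ cos(2(t + t₀)), −h₀ sin(2(t + t₀)), h₀). In particular, the image under I of the (incomplete) integral curves t ↦ (h₀ cos²(t + t₀), −tan(t + t₀)) of the reduced Hamiltonian system coincides, wherever defined, with the smooth periodic curve t ↦ (−h₀ cos(2(t + t₀)), −h₀ sin(2(t + t₀)), h₀), which is defined for all t ∈ ℝ. -/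
/-- The image under `I` of the integral curve `t ↦ (h₀ cos²(t + t₀), −tan(t + t₀))` of
the reduced Hamiltonian system is, wherever the curve is defined, the smooth periodic
curve `t ↦ (−h₀ cos(2(t + t₀)), −h₀ sin(2(t + t₀)), h₀)`. -/
theorem oscI_integral_curve (h₀ t₀ : ℝ) (_hh : 0 < h₀) (t : ℝ)
    (ht : Real.cos (t + t₀) ≠ 0) :
    oscI (h₀ * Real.cos (t + t₀) ^ 2, -Real.tan (t + t₀)) =
      (-h₀ * Real.cos (2 * (t + t₀)), -h₀ * Real.sin (2 * (t + t₀)), h₀) := by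
  have hs := Real.sin_sq_add_cos_sq (t + t₀)
  simp only [oscI, Prod.mk.injEq]
  rw [Real.tan_eq_sin_div_cos, Real.cos_two_mul, Real.sin_two_mul]
  refine ⟨?_, ?_, ?_⟩
  · field_simp
    linear_combination hs
  · field_simp
  · field_simp
    linear_combination hs
end

section
/- For the Higgs representation ρ of G = SU(2) × Circle on ℂ²: the origin 0 ∈ ℂ² is fixed by every element of G, the stabilizer of the point (0, 1) ∈ ℂ² equals the subgroup K, and for every nonzero z ∈ ℂ² the stabilizer of z is conjugate in G to K (which is isomorphic to the circle group U(1)). -/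
/-!
The stabilizer of `(0, 1)` consists of the pairs `(A, v)` for which the second column of `A` is
`(0, v⁻¹)`. Unitarity then kills the remaining off-diagonal entry, and `det A = 1` forces the
remaining diagonal entry to be `v` (`stab_base`). Any nonzero `z` is `r • A (0, 1)` with
`r = ‖z‖ ≠ 0` and some `A ∈ SU(2)` (`exists_SU2_smul`): complete the unit vector `z / r` to a
special unitary matrix with it as second column. Since the action is linear, the stabilizer of `z`
is that of `A (0, 1)`, which is the conjugate by `A` of the stabilizer of `(0, 1)`.
-/


/-- The special unitary group `SU(2)` as a subgroup of the unitary group of `2 × 2`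
complex matrices. -/
def SU2 : Subgroup (Matrix.unitaryGroup (Fin 2) ℂ) where
  carrier := {A | (A : Matrix (Fin 2) (Fin 2) ℂ).det = 1}
  one_mem' := by
    show (1 : Matrix (Fin 2) (Fin 2) ℂ).det = 1
    simp
  mul_mem' := by
    intro a b ha hb
    show ((a : Matrix (Fin 2) (Fin 2) ℂ) * (b : Matrix (Fin 2) (Fin 2) ℂ)).det = 1
    rw [Matrix.det_mul]
    rw [show ((a : Matrix (Fin 2) (Fin 2) ℂ)).det = 1 from ha,
      show ((b : Matrix (Fin 2) (Fin 2) ℂ)).det = 1 from hb, mul_one]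
  inv_mem' := by
    intro a ha
    show (star (a : Matrix (Fin 2) (Fin 2) ℂ)).det = 1
    rw [Matrix.star_eq_conjTranspose, Matrix.det_conjTranspose,
      show ((a : Matrix (Fin 2) (Fin 2) ℂ)).det = 1 from ha, star_one]

/-- The underlying matrix of an element of `SU(2)`. -/
def SU2mat (a : SU2) : Matrix (Fin 2) (Fin 2) ℂ :=
  ((a : Matrix.unitaryGroup (Fin 2) ℂ) : Matrix (Fin 2) (Fin 2) ℂ)

/-- The gauge group `G = SU(2) × U(1)` of the Glashow–Weinberg–Salam model. -/
abbrev GWSGroup := SU2 × Circle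

/-- The Higgs representation `ρ_{(a,v)}(z) = v · (a z)` of `SU(2) × U(1)` on `ℂ²`. -/
noncomputable def higgsRep (g : GWSGroup) (z : Fin 2 → ℂ) : Fin 2 → ℂ :=
  (g.2 : ℂ) • Matrix.mulVec (SU2mat g.1) z

/-- The subgroup `K ⊆ G`, the image of `v ↦ (diag(v, v⁻¹), v)`, viewed as a subset. -/
def GWSK : Set GWSGroup :=
  {g : GWSGroup | SU2mat g.1 = Matrix.diagonal ![(g.2 : ℂ), (g.2 : ℂ)⁻¹]}

theorem higgsRep_mul (g h : GWSGroup) (z : Fin 2 → ℂ) :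
    higgsRep (g * h) z = higgsRep g (higgsRep h z) := by
  have e : SU2mat (g * h).1 = SU2mat g.1 * SU2mat h.1 := rfl
  simp only [higgsRep, e, Prod.snd_mul, Circle.coe_mul, Matrix.mulVec_smul, smul_smul,
    Matrix.mulVec_mulVec]

theorem higgsRep_one (z : Fin 2 → ℂ) : higgsRep 1 z = z := by
  have e : SU2mat 1 = 1 := rfl
  simp only [higgsRep, Prod.fst_one, Prod.snd_one, e, Circle.coe_one, one_smul, Matrix.one_mulVec]

theorem higgsRep_smul (g : GWSGroup) (c : ℂ) (z : Fin 2 → ℂ) :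
    higgsRep g (c • z) = c • higgsRep g z := by
  simp only [higgsRep, Matrix.mulVec_smul]
  rw [smul_comm]

theorem stab_base : {g : GWSGroup | higgsRep g ![0, 1] = ![0, 1]} = GWSK := by
  ext ⟨a, v⟩
  have hv : (v : ℂ) ≠ 0 := v.coe_ne_zero
  have hdet : (SU2mat a).det = 1 := a.2
  have hU : SU2mat a * star (SU2mat a) = 1 := Matrix.mem_unitaryGroup_iff.1 a.1.2
  simp only [GWSK, Set.mem_ofPred_eq, higgsRep]
  generalize SU2mat a = A at *
  constructor
  · intro h
    have h0 := congrFun h 0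
    have h1 := congrFun h 1
    simp [hv] at h0 h1
    have h10 := congrFun (congrFun hU 1) 0
    simp [Matrix.mul_apply, Fin.sum_univ_two, Matrix.star_apply, h0] at h10
    rw [Matrix.det_fin_two, h0] at hdet
    have h00 : A 0 0 ≠ 0 := by
      intro h
      simp [h] at hdet
    have h10' : A 1 0 = 0 := by simpa [h00] using h10
    have e1 : A 1 1 = (v : ℂ)⁻¹ := eq_inv_of_mul_eq_one_right h1
    have e0 : A 0 0 = v := by
      rw [e1] at hdet
      field_simp at hdet
      simpa [sub_eq_zero] using hdet
    ext i j
    fin_cases i <;> fin_cases j <;> simp [h0, h10', e1, e0]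
  · rintro rfl
    ext i
    fin_cases i <;> simp

/-- Every nonzero vector is a nonzero multiple of a vector in the `SU(2)`-orbit of `(0, 1)`. -/
theorem exists_SU2_smul (z : Fin 2 → ℂ) (hz : z ≠ 0) :
    ∃ (a : GWSGroup) (r : ℂ), r ≠ 0 ∧ z = r • higgsRep a ![0, 1] := by
  have hn : 0 < Complex.normSq (z 0) + Complex.normSq (z 1) := by
    have p0 := Complex.normSq_nonneg (z 0)
    have p1 := Complex.normSq_nonneg (z 1)
    refine lt_of_le_of_ne (by positivity) fun h => hz ?_
    ext i
    fin_cases i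
    · have h0 : Complex.normSq (z 0) = 0 := by linarith
      exact Complex.normSq_eq_zero.1 h0
    · have h1 : Complex.normSq (z 1) = 0 := by linarith
      exact Complex.normSq_eq_zero.1 h1
  obtain ⟨r, hr, hr2⟩ : ∃ r : ℝ, r ≠ 0 ∧ r ^ 2 = Complex.normSq (z 0) + Complex.normSq (z 1) :=
    ⟨_, (Real.sqrt_pos.2 hn).ne', Real.sq_sqrt hn.le⟩
  have hrC : (r : ℂ) ≠ 0 := by exact_mod_cast hr
  have hr2C : (r : ℂ) ^ 2 = z 0 * star (z 0) + z 1 * star (z 1) := by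
    have := congrArg (fun x : ℝ => (x : ℂ)) hr2
    simpa [Complex.mul_conj] using this
  -- the special unitary matrix whose second column is `z / r`
  let A : Matrix (Fin 2) (Fin 2) ℂ :=
    !![star (z 1) / r, z 0 / r; -star (z 0) / r, z 1 / r]
  have hA : A ∈ Matrix.unitaryGroup (Fin 2) ℂ := by
    rw [Matrix.mem_unitaryGroup_iff]
    simp only [Complex.star_def] at hr2C
    ext i j
    fin_cases i <;> fin_cases j <;>
      simp [A, Matrix.mul_apply, Fin.sum_univ_two, Matrix.star_apply] <;>
      field_simp <;> (try rw [hr2C]) <;> ring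
  have hdet : A.det = 1 := by
    simp only [A, Matrix.det_fin_two_of]
    field_simp
    rw [hr2C]
    ring
  refine ⟨(⟨⟨A, hA⟩, hdet⟩, 1), r, hrC, ?_⟩
  have e : SU2mat ⟨⟨A, hA⟩, hdet⟩ = A := rfl
  simp only [higgsRep, e]
  ext i
  fin_cases i <;> simp [A] <;> field_simp

/-- For the Higgs representation of `SU(2) × U(1)` on `ℂ²`: the origin is fixed by every
group element, the stabilizer of `(0, 1)` equals `K`, and the stabilizer of every nonzero
`z ∈ ℂ²` is conjugate in `G` to `K` (which is isomorphic to `U(1)`). -/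
theorem higgs_stabilizers :
    (∀ g : GWSGroup, higgsRep g 0 = 0) ∧
    {g : GWSGroup | higgsRep g ![0, 1] = ![0, 1]} = GWSK ∧
    (∀ z : Fin 2 → ℂ, z ≠ 0 → ∃ a : GWSGroup,
      {g : GWSGroup | higgsRep g z = z} = (fun x => a * x * a⁻¹) '' GWSK) := by
  refine ⟨fun g => by simp [higgsRep], stab_base, fun z hz => ?_⟩
  obtain ⟨a, r, hr, rfl⟩ := exists_SU2_smul z hz
  refine ⟨a, ?_⟩
  have key (g : GWSGroup) : higgsRep g (r • higgsRep a ![0, 1]) = r • higgsRep a ![0, 1] ↔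
      a⁻¹ * g * a ∈ GWSK := by
    rw [higgsRep_smul, (smul_right_injective _ hr).eq_iff, ← stab_base, Set.mem_ofPred_eq,
      higgsRep_mul, higgsRep_mul]
    constructor
    · intro h
      rw [h, ← higgsRep_mul, inv_mul_cancel, higgsRep_one]
    · intro h
      have h' := congrArg (higgsRep a) h
      rwa [← higgsRep_mul a a⁻¹, mul_inv_cancel, higgsRep_one] at h'
  ext g
  rw [Set.mem_ofPred_eq, key]
  constructor
  · intro h
    exact ⟨_, h, by group⟩
  · rintro ⟨x, hx, rfl⟩
    have e : a⁻¹ * (a * x * a⁻¹) * a = x := by group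
    simpa only [e] using hx
end

section
/- For every z ∈ ℂ², the orbit of z under the Higgs representation ρ of G = SU(2) × Circle equals the sphere {w ∈ ℂ² : ‖w‖ = ‖z‖}. In particular, the orbit of every nonzero z is a three-sphere centered at the origin, and already the SU(2)-factor acts transitively on each such sphere. -/
theorem normSq_mulVec_SU2mat (a : SU2) (z : Fin 2 → ℂ) :
    Complex.normSq (Matrix.mulVec (SU2mat a) z 0) + Complex.normSq (Matrix.mulVec (SU2mat a) z 1) =
      Complex.normSq (z 0) + Complex.normSq (z 1) := by
  have hu : star (SU2mat a) * SU2mat a = 1 :=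
    Matrix.mem_unitaryGroup_iff'.mp (a : Matrix.unitaryGroup (Fin 2) ℂ).2
  have h (i j : Fin 2) := congrFun (congrFun hu i) j
  have h00 := h 0 0
  have h01 := h 0 1
  have h10 := h 1 0
  have h11 := h 1 1
  simp only [Matrix.mul_apply, Matrix.star_apply, Fin.sum_univ_two, Matrix.one_apply,
    Complex.star_def, if_true, zero_ne_one, one_ne_zero, if_false] at h00 h01 h10 h11
  apply Complex.ofReal_injective
  simp only [Complex.ofReal_add, Complex.normSq_eq_conj_mul_self, Matrix.mulVec, dotProduct,
    Fin.sum_univ_two, map_add, map_mul]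
  linear_combination (starRingEnd ℂ (z 0) * z 0) * h00 + (starRingEnd ℂ (z 0) * z 1) * h01 +
    (starRingEnd ℂ (z 1) * z 0) * h10 + (starRingEnd ℂ (z 1) * z 1) * h11

theorem exists_SU2mat_eq (α β : ℂ)
    (h : starRingEnd ℂ α * α + starRingEnd ℂ β * β = 1) :
    ∃ a : SU2, SU2mat a = !![α, -starRingEnd ℂ β; β, starRingEnd ℂ α] := by
  have hu : !![α, -starRingEnd ℂ β; β, starRingEnd ℂ α] ∈ Matrix.unitaryGroup (Fin 2) ℂ := by
    rw [Matrix.mem_unitaryGroup_iff']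
    ext i j
    fin_cases i <;> fin_cases j <;>
      simp [Matrix.mul_apply, Fin.sum_univ_two, Matrix.star_apply] <;>
      first | ring1 | linear_combination h
  have hd : (!![α, -starRingEnd ℂ β; β, starRingEnd ℂ α]).det = 1 := by
    rw [Matrix.det_fin_two_of]
    linear_combination h
  exact ⟨⟨⟨_, hu⟩, hd⟩, rfl⟩

theorem exists_SU2mat_mulVec_eq (z w : Fin 2 → ℂ)
    (h : Complex.normSq (w 0) + Complex.normSq (w 1) =
      Complex.normSq (z 0) + Complex.normSq (z 1)) :
    ∃ a : SU2, Matrix.mulVec (SU2mat a) z = w := by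
  have hC := congrArg Complex.ofReal h
  simp only [Complex.ofReal_add, Complex.normSq_eq_conj_mul_self] at hC
  by_cases hN : Complex.normSq (z 0) + Complex.normSq (z 1) = 0
  · -- Both vectors vanish, and any group element will do.
    have key (u : Fin 2 → ℂ) (hu : Complex.normSq (u 0) + Complex.normSq (u 1) = 0) : u = 0 := by
      have h0 := Complex.normSq_nonneg (u 0)
      have h1 := Complex.normSq_nonneg (u 1)
      ext i
      fin_cases i
      · exact Complex.normSq_eq_zero.mp (by simp only [Fin.zero_eta]; linarith)
      · exact Complex.normSq_eq_zero.mp (by simp only [Fin.mk_one]; linarith)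
    refine ⟨1, ?_⟩
    rw [key z hN, key w (h.trans hN), Matrix.mulVec_zero]
  · have hN' : starRingEnd ℂ (z 0) * z 0 + starRingEnd ℂ (z 1) * z 1 ≠ 0 := by
      simpa only [← Complex.normSq_eq_conj_mul_self, ← Complex.ofReal_add,
        Complex.ofReal_ne_zero] using hN
    obtain ⟨N, hNdef⟩ : ∃ N, N = starRingEnd ℂ (z 0) * z 0 + starRingEnd ℂ (z 1) * z 1 := ⟨_, rfl⟩
    rw [← hNdef] at hN' hC
    have hNc : starRingEnd ℂ N = N := by
      simp only [hNdef, map_add, map_mul, Complex.conj_conj]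
      ring
    obtain ⟨a, ha⟩ := exists_SU2mat_eq
      ((w 0 * starRingEnd ℂ (z 0) + starRingEnd ℂ (w 1) * z 1) / N)
      ((w 1 * starRingEnd ℂ (z 0) - starRingEnd ℂ (w 0) * z 1) / N) (by
        simp only [map_div₀, map_add, map_sub, map_mul, Complex.conj_conj, hNc]
        field_simp
        -- The numerator is `‖w‖² ‖z‖²`.
        linear_combination (-(starRingEnd ℂ (w 0) * w 0 + starRingEnd ℂ (w 1) * w 1)) * hNdef
          + N * hC)
    refine ⟨a, ?_⟩
    rw [ha]
    ext i
    fin_cases i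
    · simp only [Matrix.mulVec, dotProduct, Fin.sum_univ_two, map_div₀, map_add, map_sub, map_mul,
        Complex.conj_conj, hNc, Fin.zero_eta, Matrix.of_apply, Matrix.cons_val_zero,
        Matrix.cons_val_one]
      field_simp
      linear_combination (-w 0) * hNdef
    · simp only [Matrix.mulVec, dotProduct, Fin.sum_univ_two, map_div₀, map_add, map_sub, map_mul,
        Complex.conj_conj, hNc, Fin.mk_one, Matrix.of_apply, Matrix.cons_val_zero,
        Matrix.cons_val_one]
      field_simp
      linear_combination (-w 1) * hNdef

/-- For every `z ∈ ℂ²`, the orbit of `z` under the Higgs representation of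
`SU(2) × U(1)` equals the sphere `{w : ‖w‖ = ‖z‖}` (with the Hermitian norm
`‖w‖² = |w₀|² + |w₁|²`), and already the `SU(2)`-factor acts transitively on this
sphere. -/
theorem higgs_orbit_eq_sphere (z : Fin 2 → ℂ) :
    {w : Fin 2 → ℂ | ∃ g : GWSGroup, higgsRep g z = w} =
      {w : Fin 2 → ℂ | Complex.normSq (w 0) + Complex.normSq (w 1) =
        Complex.normSq (z 0) + Complex.normSq (z 1)} ∧
    {w : Fin 2 → ℂ | ∃ a : SU2, Matrix.mulVec (SU2mat a) z = w} =
      {w : Fin 2 → ℂ | Complex.normSq (w 0) + Complex.normSq (w 1) =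
        Complex.normSq (z 0) + Complex.normSq (z 1)} := by
  constructor
  · ext w
    constructor
    · rintro ⟨g, rfl⟩
      simp only [Set.mem_ofPred_eq, higgsRep, Pi.smul_apply, smul_eq_mul, Complex.normSq_mul,
        Circle.normSq_coe, one_mul]
      exact normSq_mulVec_SU2mat g.1 z
    · intro h
      obtain ⟨a, ha⟩ := exists_SU2mat_mulVec_eq z w h
      exact ⟨(a, 1), by simp [higgsRep, ha]⟩
  · ext w
    constructor
    · rintro ⟨a, rfl⟩
      exact normSq_mulVec_SU2mat a z
    · exact exists_SU2mat_mulVec_eq z w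
end

section
/- Every Howe subgroup of SU(2) is either SU(2) itself, or the center Z(SU(2)) = {I, −I}, or conjugate in SU(2) to the diagonal maximal torus T = {diag(v, v⁻¹) : v ∈ ℂ, |v| = 1}. That is, if H is a subgroup of SU(2) for which there exists a subgroup S of SU(2) with H = C_{SU(2)}(S), then H = SU(2), or H = Z(SU(2)), or there exists a ∈ SU(2) with H = a T a⁻¹. -/
namespace HoweSU2

/-- The diagonal maximal torus of `SU(2)`, written as in the main statement. -/
def torus : Set SU2 := {g : SU2 | ∃ v : ℂ, ‖v‖ = 1 ∧ SU2mat g = Matrix.diagonal ![v, v⁻¹]}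

/-- The predicate `g = ±I`. -/
def IsScalar (g : SU2) : Prop := SU2mat g = 1 ∨ SU2mat g = -1

lemma mat_injective : Function.Injective SU2mat := fun _ _ h => Subtype.ext (Subtype.ext h)

lemma mat_mul (a b : SU2) : SU2mat (a * b) = SU2mat a * SU2mat b := rfl

lemma mat_det (a : SU2) : (SU2mat a).det = 1 := a.2

lemma mat_star_mul (a : SU2) : star (SU2mat a) * SU2mat a = 1 :=
  Matrix.mem_unitaryGroup_iff'.1 a.1.2

/-- Orthogonality of the two columns forces the upper right entry to vanish together with the
lower left one. -/
lemma mem_torus_of_entry (g : SU2) (h : SU2mat g 1 0 = 0) : g ∈ torus := by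
  have hd := mat_det g
  have h00 := congrFun (congrFun (mat_star_mul g) 0) 0
  have h01 := congrFun (congrFun (mat_star_mul g) 0) 1
  simp only [Matrix.mul_apply, Fin.sum_univ_two, Matrix.star_apply, Matrix.one_apply, h] at h00 h01
  simp only [star_zero, zero_mul, add_zero, if_true] at h00 h01
  rw [Matrix.det_fin_two, h, mul_zero, sub_zero] at hd
  have hv : SU2mat g 0 0 ≠ 0 := left_ne_zero_of_mul_eq_one hd
  have h2 : SU2mat g 0 1 = 0 := by
    simpa [hv] using h01
  refine ⟨SU2mat g 0 0, ?_, ?_⟩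
  · have h3 : ‖star (SU2mat g 0 0) * SU2mat g 0 0‖ = 1 := by rw [h00, norm_one]
    rw [norm_mul, norm_star] at h3
    nlinarith [norm_nonneg (SU2mat g 0 0)]
  · ext i j
    fin_cases i <;> fin_cases j
    · simp
    · simpa using h2
    · simpa using h
    · simpa using eq_inv_of_mul_eq_one_right hd

lemma torus_commute {s t : SU2} (hs : s ∈ torus) (ht : t ∈ torus) : s * t = t * s := by
  obtain ⟨v, -, hv⟩ := hs
  obtain ⟨w, -, hw⟩ := ht
  apply mat_injective
  rw [mat_mul, mat_mul, hv, hw, Matrix.diagonal_mul_diagonal, Matrix.diagonal_mul_diagonal]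
  congr 1
  funext i
  exact mul_comm _ _

lemma isScalar_commute {s : SU2} (hs : IsScalar s) (t : SU2) : s * t = t * s := by
  apply mat_injective
  rw [mat_mul, mat_mul]
  rcases hs with h | h <;> simp [h]

/-- The centralizer of a non-scalar torus element is contained in the torus. -/
lemma mem_torus_of_commute {t g : SU2} (ht : t ∈ torus) (hn : ¬ IsScalar t)
    (hc : t * g = g * t) : g ∈ torus := by
  obtain ⟨v, hv, hm⟩ := ht
  have hv0 : v ≠ 0 := by rintro rfl; simp at hv
  apply mem_torus_of_entry
  have h := congrFun (congrFun (congrArg SU2mat hc) 1) 0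
  rw [mat_mul, mat_mul, hm, Matrix.diagonal_mul, Matrix.mul_diagonal] at h
  simp only [Matrix.cons_val_one, Matrix.cons_val_zero] at h
  by_contra h0
  have h1 : v⁻¹ = v := mul_right_cancel₀ h0 (h.trans (mul_comm _ _))
  apply hn
  have h2 : v * v = 1 := by
    nth_rewrite 1 [← h1]
    exact inv_mul_cancel₀ hv0
  rcases mul_self_eq_one_iff.1 h2 with rfl | rfl
  · left
    rw [hm]
    ext i j
    fin_cases i <;> fin_cases j <;> simp
  · right
    rw [hm]
    ext i j
    fin_cases i <;> fin_cases j <;> simp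

/-- Every unit vector of `ℂ²` is the first column of an element of `SU(2)`. -/
lemma exists_mat (x y : ℂ) (h : star x * x + star y * y = 1) :
    ∃ a : SU2, SU2mat a = !![x, -star y; y, star x] := by
  have hu : !![x, -star y; y, star x] ∈ Matrix.unitaryGroup (Fin 2) ℂ := by
    rw [Matrix.mem_unitaryGroup_iff']
    ext i j
    fin_cases i <;> fin_cases j <;>
      simp [Matrix.mul_apply, Fin.sum_univ_two, Matrix.star_apply] <;>
      simp only [RCLike.star_def] at h <;> first | linear_combination h | ring
  refine ⟨⟨⟨_, hu⟩, ?_⟩, rfl⟩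
  show Matrix.det !![x, -star y; y, star x] = 1
  rw [Matrix.det_fin_two_of]
  linear_combination h

lemma exists_unit_eigenvector (M : Matrix (Fin 2) (Fin 2) ℂ) :
    ∃ (v x y : ℂ), star x * x + star y * y = 1 ∧
      M 0 0 * x + M 0 1 * y = v * x ∧ M 1 0 * x + M 1 1 * y = v * y := by
  obtain ⟨v, hv⟩ := Module.End.exists_eigenvalue (Matrix.toLin' M)
  obtain ⟨u, hu⟩ := hv.exists_hasEigenvector
  have he := hu.apply_eq_smul
  have h0 := congrFun he 0
  have h1 := congrFun he 1
  simp only [Matrix.toLin'_apply, Matrix.mulVec, dotProduct, Fin.sum_univ_two, Pi.smul_apply,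
    smul_eq_mul] at h0 h1
  have hpos : 0 < Complex.normSq (u 0) + Complex.normSq (u 1) := by
    by_contra hc
    have a0 := Complex.normSq_nonneg (u 0)
    have a1 := Complex.normSq_nonneg (u 1)
    apply hu.2
    funext i
    fin_cases i
    · exact Complex.normSq_eq_zero.1 (le_antisymm (by change Complex.normSq (u 0) ≤ 0; linarith) a0)
    · exact Complex.normSq_eq_zero.1 (le_antisymm (by change Complex.normSq (u 1) ≤ 0; linarith) a1)
  set N := Complex.normSq (u 0) + Complex.normSq (u 1) with hN
  obtain ⟨r, hr⟩ : ∃ r : ℝ, r * r * N = 1 := by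
    refine ⟨(Real.sqrt N)⁻¹, ?_⟩
    rw [← mul_inv, Real.mul_self_sqrt hpos.le, inv_mul_cancel₀ hpos.ne']
  refine ⟨v, r * u 0, r * u 1, ?_, ?_, ?_⟩
  · have hr' : (r : ℂ) * r * (star (u 0) * u 0 + star (u 1) * u 1) = 1 := by
      have e0 : star (u 0) * u 0 = (Complex.normSq (u 0) : ℂ) := Complex.normSq_eq_conj_mul_self.symm
      have e1 : star (u 1) * u 1 = (Complex.normSq (u 1) : ℂ) := Complex.normSq_eq_conj_mul_self.symm
      rw [e0, e1]
      exact_mod_cast hr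
    have er : star (r : ℂ) = r := Complex.conj_ofReal r
    rw [star_mul', star_mul', er]
    linear_combination hr'
  · linear_combination (r : ℂ) * h0
  · linear_combination (r : ℂ) * h1

lemma exists_conj_mem_torus (h : SU2) : ∃ a : SU2, a⁻¹ * h * a ∈ torus := by
  obtain ⟨v, x, y, hxy, h0, h1⟩ := exists_unit_eigenvector (SU2mat h)
  obtain ⟨a, ha⟩ := exists_mat x y hxy
  refine ⟨a, mem_torus_of_entry _ ?_⟩
  have hinv : SU2mat a⁻¹ = star (SU2mat a) := rfl
  rw [mul_assoc, mat_mul, mat_mul, hinv, ha]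
  simp only [Matrix.mul_apply, Fin.sum_univ_two, Matrix.star_apply]
  simp
  linear_combination (-y) * h0 + x * h1

/-- A conjugate of `±I` is `±I`, in the form used to transport non-scalarity to the torus. -/
lemma isScalar_of_conj {a g : SU2} (h : IsScalar (a⁻¹ * g * a)) : IsScalar g := by
  have : a⁻¹ * g * a = g := by
    have h1 := isScalar_commute h a⁻¹
    have h2 : a⁻¹ * g * a * a⁻¹ = a⁻¹ * g := by group
    rw [h2] at h1
    exact (mul_left_cancel h1).symm
  rwa [this] at h

lemma conj_commute {a s t : SU2} (h : s * t = t * s) :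
    (a⁻¹ * s * a) * (a⁻¹ * t * a) = (a⁻¹ * t * a) * (a⁻¹ * s * a) := by
  have e : ∀ p q : SU2, (a⁻¹ * p * a) * (a⁻¹ * q * a) = a⁻¹ * (p * q) * a := by
    intro p q; group
  rw [e, e, h]

lemma commute_of_conj {a s t : SU2}
    (h : (a⁻¹ * s * a) * (a⁻¹ * t * a) = (a⁻¹ * t * a) * (a⁻¹ * s * a)) : s * t = t * s := by
  have e : ∀ p q : SU2, (a⁻¹ * p * a) * (a⁻¹ * q * a) = a⁻¹ * (p * q) * a := by
    intro p q; group
  rw [e, e] at h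
  exact mul_left_cancel (mul_right_cancel h)

end HoweSU2

open HoweSU2 in
/-- Every Howe subgroup of `SU(2)` (i.e. a subgroup of the form `C_{SU(2)}(S)` for some
subgroup `S`) is either `SU(2)` itself, or the center `{I, −I}`, or conjugate in `SU(2)`
to the diagonal maximal torus `T = {diag(v, v⁻¹) : |v| = 1}`. -/
theorem howe_subgroups_of_SU2 (H : Subgroup SU2)
    (hHowe : ∃ S : Subgroup SU2, H = Subgroup.centralizer (S : Set SU2)) :
    H = ⊤ ∨
    (H : Set SU2) = {g : SU2 | SU2mat g = 1 ∨ SU2mat g = -1} ∨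
    ∃ a : SU2, (H : Set SU2) =
      (fun x => a * x * a⁻¹) ''
        {g : SU2 | ∃ v : ℂ, ‖v‖ = 1 ∧ SU2mat g = Matrix.diagonal ![v, v⁻¹]} := by
  obtain ⟨S, rfl⟩ := hHowe
  by_cases hH : ∀ h ∈ Subgroup.centralizer (S : Set SU2), IsScalar h
  · right; left
    ext g
    refine ⟨fun hg => hH g hg, fun hg => ?_⟩
    exact Subgroup.mem_centralizer_iff.2 fun s _ => (isScalar_commute hg s).symm
  push Not at hH
  obtain ⟨h, hh, hns⟩ := hH
  by_cases hS : ∀ s ∈ S, IsScalar s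
  · left
    rw [eq_top_iff]
    exact fun g _ => Subgroup.mem_centralizer_iff.2 fun s hs => isScalar_commute (hS s hs) g
  push Not at hS
  obtain ⟨s, hs, hnss⟩ := hS
  right; right
  obtain ⟨a, ha⟩ := exists_conj_mem_torus h
  have hST : ∀ s ∈ S, a⁻¹ * s * a ∈ torus := fun s hs =>
    mem_torus_of_commute ha (fun hc => hns (isScalar_of_conj hc))
      (conj_commute (Subgroup.mem_centralizer_iff.1 hh s hs).symm)
  refine ⟨a, ?_⟩
  ext g
  constructor
  · intro hg
    refine ⟨a⁻¹ * g * a, ?_, by group⟩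
    exact mem_torus_of_commute (hST s hs) (fun hc => hnss (isScalar_of_conj hc))
      (conj_commute (Subgroup.mem_centralizer_iff.1 hg s hs))
  · rintro ⟨t, ht, rfl⟩
    refine Subgroup.mem_centralizer_iff.2 fun s hs => commute_of_conj (a := a) ?_
    have e : a⁻¹ * (a * t * a⁻¹) * a = t := by group
    rw [e]
    exact torus_commute (hST s hs) ht
end

section
/- Every Howe subgroup of the group G = SU(2) × Circle is conjugate in G to one of the following three subgroups: G itself, T × Circle, or Z × Circle, where T = {diag(v, v⁻¹) : v ∈ ℂ, |v| = 1} is the diagonal maximal torus of SU(2) and Z = {I, −I} is the center of SU(2). -/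
open ComplexConjugate in
/-- The element of `SU(2)` with first column `(a, b)`, a unit vector of `ℂ²`. -/
def mkSU2 (a b : ℂ) (h : a * conj a + b * conj b = 1) : SU2 :=
  ⟨⟨!![a, -conj b; b, conj a], by
    rw [Matrix.mem_unitaryGroup_iff]
    ext i j
    fin_cases i <;> fin_cases j <;>
      simp [Matrix.mul_apply, Fin.sum_univ_two, Matrix.star_apply] <;>
      first | linear_combination h | ring⟩, by
    change Matrix.det !![a, -conj b; b, conj a] = 1
    rw [Matrix.det_fin_two_of]
    linear_combination h⟩

lemma SU2mat_mul (a b : SU2) : SU2mat (a * b) = SU2mat a * SU2mat b := rfl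

lemma SU2mat_injective : Function.Injective SU2mat := fun _ _ h =>
  Subtype.ext (Subtype.ext h)

lemma SU2mat_inv (a : SU2) : SU2mat a⁻¹ = star (SU2mat a) := rfl

lemma SU2mat_det (a : SU2) : (SU2mat a).det = 1 := a.2

/-- The inverse of `A ∈ SU(2)` is both its conjugate transpose and its adjugate. -/
lemma SU2mat_star (a : SU2) : star (SU2mat a) = (SU2mat a).adjugate := by
  have h1 : star (SU2mat a) * SU2mat a = 1 := Matrix.mem_unitaryGroup_iff'.1 a.1.2
  have h2 : SU2mat a * (SU2mat a).adjugate = 1 := by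
    rw [Matrix.mul_adjugate, SU2mat_det, one_smul]
  exact left_inv_eq_right_inv h1 h2

open ComplexConjugate in
lemma SU2mat_conj_00 (a : SU2) : conj (SU2mat a 0 0) = SU2mat a 1 1 := by
  have h := congrFun (congrFun (SU2mat_star a) 0) 0
  simpa [Matrix.adjugate_fin_two, Matrix.star_apply] using h

open ComplexConjugate in
lemma SU2mat_conj_10 (a : SU2) : conj (SU2mat a 1 0) = -SU2mat a 0 1 := by
  have h := congrFun (congrFun (SU2mat_star a) 0) 1
  simpa [Matrix.adjugate_fin_two, Matrix.star_apply] using h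

open ComplexConjugate in
/-- Every element of `SU(2)` is conjugate to one with lower-left entry `0`, hence to a diagonal one. For a unit
vector `(a, b)` the lower-left entry of the conjugate is a binary quadratic form in `(a, b)`,
which has a nontrivial zero over `ℂ`. -/
lemma exists_conj_lower_zero (A : SU2) : ∃ P : SU2, SU2mat (P⁻¹ * A * P) 1 0 = 0 := by
  obtain ⟨a, b, hab, hq⟩ : ∃ a b : ℂ, a * conj a + b * conj b = 1 ∧
      SU2mat A 1 0 * (a * a) + (SU2mat A 1 1 - SU2mat A 0 0) * (a * b)
        - SU2mat A 0 1 * (b * b) = 0 := by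
    by_cases h0 : SU2mat A 1 0 = 0
    · exact ⟨1, 0, by simp, by simp [h0]⟩
    · obtain ⟨x, hx⟩ := exists_quadratic_eq_zero
        (b := SU2mat A 1 1 - SU2mat A 0 0) (c := -SU2mat A 0 1) h0
        (IsAlgClosed.exists_eq_mul_self _)
      have hpos : 0 < Complex.normSq x + 1 := by
        have := Complex.normSq_nonneg x
        linarith
      obtain ⟨r, hr⟩ : ∃ r : ℝ, r * r * (Complex.normSq x + 1) = 1 :=
        ⟨(√(Complex.normSq x + 1))⁻¹, by
          rw [← mul_inv, Real.mul_self_sqrt hpos.le, inv_mul_cancel₀ hpos.ne']⟩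
      refine ⟨r * x, r, ?_, ?_⟩
      · have hr' : (r : ℂ) * r * (x * conj x + 1) = 1 := by
          rw [Complex.mul_conj]
          exact_mod_cast hr
        simp only [map_mul, Complex.conj_ofReal]
        linear_combination hr'
      · linear_combination (r : ℂ) * r * hx
  refine ⟨mkSU2 a b hab, ?_⟩
  rw [SU2mat_mul, SU2mat_mul, SU2mat_inv, SU2mat_star]
  have hm : SU2mat (mkSU2 a b hab) = !![a, -conj b; b, conj a] := rfl
  rw [hm]
  simp [Matrix.adjugate_fin_two, Matrix.mul_apply, Matrix.vecMul, dotProduct, Fin.sum_univ_two]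
  linear_combination hq

/-- The elements `±I` of `SU(2)`, described by matrix entries. -/
lemma SU2_mem_center_iff (A : SU2) :
    (SU2mat A = 1 ∨ SU2mat A = -1) ↔ SU2mat A 1 0 = 0 ∧ SU2mat A 0 0 = SU2mat A 1 1 := by
  constructor
  · rintro (h | h) <;> simp [h]
  · rintro ⟨h10, h00⟩
    have h01 : SU2mat A 0 1 = 0 := by
      have := SU2mat_conj_10 A
      rw [h10] at this
      simpa using this.symm
    have hd := SU2mat_det A
    rw [Matrix.det_fin_two, h10, ← h00] at hd
    have hs : SU2mat A 0 0 = 1 ∨ SU2mat A 0 0 = -1 := mul_self_eq_one_iff.1 (by simpa using hd)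
    rcases hs with hs | hs
    · left
      ext i j
      fin_cases i <;> fin_cases j <;> simp [h10, h01, ← h00, hs]
    · right
      ext i j
      fin_cases i <;> fin_cases j <;> simp [h10, h01, ← h00, hs]

/-- An element of `SU(2)` lies in the diagonal torus iff its lower-left entry vanishes: the
other entries are then forced by unitarity. -/
lemma SU2_mem_torus_iff (A : SU2) :
    (∃ v : ℂ, ‖v‖ = 1 ∧ SU2mat A = Matrix.diagonal ![v, v⁻¹]) ↔ SU2mat A 1 0 = 0 := by
  constructor
  · rintro ⟨v, -, h⟩
    simp [h]
  · intro h10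
    have h01 : SU2mat A 0 1 = 0 := by
      have := SU2mat_conj_10 A
      rw [h10] at this
      simpa using this.symm
    have hd := SU2mat_det A
    rw [Matrix.det_fin_two, h10, mul_zero, sub_zero] at hd
    refine ⟨SU2mat A 0 0, ?_, ?_⟩
    · rw [← SU2mat_conj_00, Complex.mul_conj, Complex.normSq_eq_norm_sq] at hd
      have h2 : ‖SU2mat A 0 0‖ ^ 2 = 1 := by exact_mod_cast hd
      exact (pow_eq_one_iff_of_nonneg (norm_nonneg _) two_ne_zero).1 h2
    · have h11 : (SU2mat A 0 0)⁻¹ = SU2mat A 1 1 := inv_eq_of_mul_eq_one_right hd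
      ext i j
      fin_cases i <;> fin_cases j <;> simp [h10, h01, h11]

lemma SU2_commute_of_center {A : SU2} (hA : SU2mat A = 1 ∨ SU2mat A = -1) (B : SU2) :
    Commute A B := by
  apply SU2mat_injective
  rw [SU2mat_mul, SU2mat_mul]
  rcases hA with h | h <;> simp [h]

/-- The lower-left entry of the identity `AB = BA` when `A` is diagonal. -/
lemma SU2_lower_of_commute {A B : SU2} (hA : SU2mat A 1 0 = 0) (h : Commute A B) :
    (SU2mat A 0 0 - SU2mat A 1 1) * SU2mat B 1 0 = 0 := by
  have h' : SU2mat A * SU2mat B = SU2mat B * SU2mat A := by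
    rw [← SU2mat_mul, ← SU2mat_mul, h.eq]
  have := congrFun (congrFun h' 1) 0
  simp [Matrix.mul_apply, Fin.sum_univ_two, hA] at this
  linear_combination -this

lemma SU2_torus_commute {A B : SU2} (hA : SU2mat A 1 0 = 0) (hB : SU2mat B 1 0 = 0) :
    Commute A B := by
  obtain ⟨v, -, hv⟩ := (SU2_mem_torus_iff A).2 hA
  obtain ⟨w, -, hw⟩ := (SU2_mem_torus_iff B).2 hB
  apply SU2mat_injective
  rw [SU2mat_mul, SU2mat_mul, hv, hw, Matrix.diagonal_mul_diagonal, Matrix.diagonal_mul_diagonal]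
  simp only [mul_comm]

lemma eq_image_conj {Γ : Type*} [Group Γ] (a : Γ) (X Y : Set Γ)
    (h : ∀ g, a * g * a⁻¹ ∈ X ↔ g ∈ Y) : X = (fun x => a * x * a⁻¹) '' Y := by
  ext g
  constructor
  · intro hg
    refine ⟨a⁻¹ * g * a, (h _).1 ?_, by group⟩
    rwa [show a * (a⁻¹ * g * a) * a⁻¹ = g by group]
  · rintro ⟨y, hy, rfl⟩
    exact (h y).2 hy

/-- Conjugating by `a = (P, 1)` moves the centralizer of `S` to that of the `SU(2)`-components of
`a⁻¹ S a`; the abelian factor `Circle` imposes no condition. -/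
lemma conj_mem_centralizer_iff (S : Subgroup GWSGroup) (P : SU2) (g : GWSGroup) :
    ((P, 1) : GWSGroup) * g * ((P, 1) : GWSGroup)⁻¹ ∈ Subgroup.centralizer (S : Set GWSGroup) ↔
      ∀ s ∈ S, Commute (P⁻¹ * s.1 * P) g.1 := by
  rw [Subgroup.mem_centralizer_iff]
  refine forall₂_congr fun s _ => ?_
  rw [Prod.ext_iff]
  simp only [Prod.fst_mul, Prod.snd_mul, Prod.fst_inv, Prod.snd_inv, mul_comm s.2, and_true]
  have hc : Commute (P⁻¹ * s.1 * P) g.1 ↔ Commute s.1 (P * g.1 * P⁻¹) := by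
    rw [← Commute.conj_iff P]
    simp only [mul_assoc, mul_inv_cancel, mul_inv_cancel_left, mul_one]
  rw [hc]
  rfl

/-- Every Howe subgroup of `G = SU(2) × U(1)` (i.e. a subgroup of the form `C_G(S)` for
some subgroup `S`) is conjugate in `G` to one of: `G` itself, `T × U(1)` (with `T` the
diagonal maximal torus of `SU(2)`), or `Z × U(1)` (with `Z = {I, −I}` the center of
`SU(2)`). -/
theorem howe_subgroups_of_GWSGroup (H : Subgroup GWSGroup)
    (hHowe : ∃ S : Subgroup GWSGroup, H = Subgroup.centralizer (S : Set GWSGroup)) :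
    ∃ a : GWSGroup,
      (H : Set GWSGroup) = (fun x => a * x * a⁻¹) '' (Set.univ : Set GWSGroup) ∨
      (H : Set GWSGroup) = (fun x => a * x * a⁻¹) ''
        {g : GWSGroup | ∃ v : ℂ, ‖v‖ = 1 ∧ SU2mat g.1 = Matrix.diagonal ![v, v⁻¹]} ∨
      (H : Set GWSGroup) = (fun x => a * x * a⁻¹) ''
        {g : GWSGroup | SU2mat g.1 = 1 ∨ SU2mat g.1 = -1} := by
  obtain ⟨S, rfl⟩ := hHowe
  by_cases hS : ∀ s ∈ S, SU2mat s.1 = 1 ∨ SU2mat s.1 = -1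
  · refine ⟨(1, 1), Or.inl (eq_image_conj _ _ _ fun g => ?_)⟩
    rw [SetLike.mem_coe, conj_mem_centralizer_iff]
    simp only [Set.mem_univ, iff_true]
    intro s hs
    simpa using SU2_commute_of_center (hS s hs) g.1
  push Not at hS
  obtain ⟨A, hAS, hA1, hA2⟩ := hS
  obtain ⟨P, hP⟩ := exists_conj_lower_zero A.1
  have hne : SU2mat (P⁻¹ * A.1 * P) 0 0 - SU2mat (P⁻¹ * A.1 * P) 1 1 ≠ 0 := by
    intro h
    -- With equal diagonal entries the conjugate is central, hence equal to `A`, which is not `±I`.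
    have hc := (SU2_mem_center_iff _).2 ⟨hP, sub_eq_zero.1 h⟩
    have hcomm := (SU2_commute_of_center hc P).eq
    have hA : P⁻¹ * A.1 * P = A.1 := by
      have : P * (P⁻¹ * A.1 * P) * P⁻¹ = A.1 := by group
      rwa [← hcomm, mul_inv_cancel_right] at this
    rw [hA] at hc
    exact hc.elim hA1 hA2
  have hT : ∀ g : SU2, Commute (P⁻¹ * A.1 * P) g → SU2mat g 1 0 = 0 := fun g hg =>
    (mul_eq_zero.1 (SU2_lower_of_commute hP hg)).resolve_left hne
  refine ⟨(P, 1), Or.inr ?_⟩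
  by_cases hD : ∀ s ∈ S, SU2mat (P⁻¹ * s.1 * P) 1 0 = 0
  · refine Or.inl (eq_image_conj _ _ _ fun g => ?_)
    rw [SetLike.mem_coe, conj_mem_centralizer_iff, Set.mem_ofPred_eq, SU2_mem_torus_iff]
    exact ⟨fun h => hT _ (h A hAS), fun h s hs => SU2_torus_commute (hD s hs) h⟩
  · push Not at hD
    obtain ⟨B, hBS, hB⟩ := hD
    refine Or.inr (eq_image_conj _ _ _ fun g => ?_)
    rw [SetLike.mem_coe, conj_mem_centralizer_iff, Set.mem_ofPred_eq]
    refine ⟨fun h => ?_, fun h s _ => (SU2_commute_of_center h _).symm⟩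
    have hg := hT _ (h A hAS)
    exact (SU2_mem_center_iff _).2 ⟨hg, sub_eq_zero.1
      ((mul_eq_zero.1 (SU2_lower_of_commute hg (h B hBS).symm)).resolve_right hB)⟩
end
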